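/- For every 1 < q < +∞ there exists a constant C_q > 0 such that for every divergence-free Schwartz vector field u : ℝ³ → ℝ³ (i.e. each component of u is a Schwartz function and ∇·u = 0), with strain tensor S and vorticity ω = ∇ × u, one has the two-sided bound (1/C_q) ‖e₃ × ω‖_{L^q} ≤ ‖2 S e₃‖_{L^q} ≤ C_q ‖e₃ × ω‖_{L^q}. -/

import Mathlib

open MeasureTheory

noncomputable section

/-- The standard basis vectors of `EuclideanSpace ℝ (Fin 3)`. -/
def ee (i : Fin 3) : EuclideanSpace ℝ (Fin 3) := EuclideanSpace.single i 1

/-- The partial derivative `∂ᵢ uⱼ` of a vector field given by its three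
(Schwartz) components. -/
def pdW (u : Fin 3 → SchwartzMap (EuclideanSpace ℝ (Fin 3)) ℝ) (i j : Fin 3)
    (x : EuclideanSpace ℝ (Fin 3)) : ℝ :=
  fderiv ℝ (u j) x (ee i)

/-- View a triple of reals as a vector in `ℝ³` with the Euclidean norm. -/
def toE3 (f : Fin 3 → ℝ) : EuclideanSpace ℝ (Fin 3) :=
  (WithLp.equiv 2 (Fin 3 → ℝ)).symm f

/-- The strain tensor `S_ij = (∂ᵢ uⱼ + ∂ⱼ uᵢ)/2`. -/
def strainW (u : Fin 3 → SchwartzMap (EuclideanSpace ℝ (Fin 3)) ℝ)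
    (x : EuclideanSpace ℝ (Fin 3)) : Matrix (Fin 3) (Fin 3) ℝ :=
  Matrix.of fun i j => (pdW u i j x + pdW u j i x) / 2

/-- The vorticity `ω = ∇ × u` (with 0-based indices). -/
def vortW (u : Fin 3 → SchwartzMap (EuclideanSpace ℝ (Fin 3)) ℝ)
    (x : EuclideanSpace ℝ (Fin 3)) : Fin 3 → ℝ :=
  ![pdW u 1 2 x - pdW u 2 1 x, pdW u 2 0 x - pdW u 0 2 x, pdW u 0 1 x - pdW u 1 0 x]

/-- The cross product in `ℝ³`. -/
def cross (a b : Fin 3 → ℝ) : Fin 3 → ℝ :=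
  ![a 1 * b 2 - a 2 * b 1, a 2 * b 0 - a 0 * b 2, a 0 * b 1 - a 1 * b 0]

/-- `B` is a Bellman function: a nonnegative convex function of `p`-`q` growth whose midpoint
convexity defect along `(a, b)` dominates `|a * b|`. -/
structure IsBellman (p q C : ℝ) (B : ℝ → ℝ → ℝ) : Prop where
  convexOn : ConvexOn ℝ Set.univ (fun z : ℝ × ℝ => B z.1 z.2)
  add_mul_le_midpoint : ∀ x y a b σ : ℝ, |σ| ≤ 1 →
    B x y + σ * (a * b) ≤ (B (x + a) (y + b) + B (x - a) (y - b)) / 2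
  nonneg : ∀ x y, 0 ≤ B x y
  le_rpow : ∀ x y, B x y ≤ C * (|x| ^ p + |y| ^ q)

theorem IsBellman.swap {p q C : ℝ} {B : ℝ → ℝ → ℝ} (h : IsBellman p q C B) :
    IsBellman q p C (fun x y => B y x) where
  convexOn := by
    have := h.convexOn.comp_linearMap (LinearEquiv.prodComm ℝ ℝ ℝ).toLinearMap
    simpa [Function.comp_def] using this
  add_mul_le_midpoint x y a b σ hσ := by
    simpa [mul_comm] using h.add_mul_le_midpoint y x b a σ hσ
  nonneg x y := h.nonneg y x
  le_rpow x y := by simpa [add_comm] using h.le_rpow y x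

theorem convexOn_rpow_sub_rpow_regularized {r ε : ℝ} (hr : 1 / 2 < r) (hr1 : r ≤ 1) (hε : 0 < ε)
    (x y d σ : ℝ) (hσ : |σ| ≤ 1) :
    ConvexOn ℝ Set.univ (fun s : ℝ => 2 / (2 * r - 1) * (ε + (x + s * d) ^ 2) ^ r
      - (ε + (x + s * d) ^ 2 + (y + s * (σ * d)) ^ 2) ^ r) := by
  have h1 : ∀ s, HasDerivAt (fun s : ℝ => ε + (x + s * d) ^ 2) (2 * d * (x + s * d)) s := by
    intro s
    have := ((((hasDerivAt_id s).mul_const d).const_add x).pow 2).const_add ε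
    simpa using this.congr_deriv (by simp; ring)
  have h2 : ∀ s, HasDerivAt (fun s : ℝ => ε + (x + s * d) ^ 2 + (y + s * (σ * d)) ^ 2)
      (2 * d * (x + s * d) + 2 * (σ * d) * (y + s * (σ * d))) s := by
    intro s
    exact ((h1 s).add ((((hasDerivAt_id s).mul_const (σ * d)).const_add y).pow 2)).congr_deriv
      (by simp; ring)
  have p1 : ∀ s, 0 < ε + (x + s * d) ^ 2 := fun s => by positivity
  have p2 : ∀ s, 0 < ε + (x + s * d) ^ 2 + (y + s * (σ * d)) ^ 2 := fun s => by positivity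
  have l1 : ∀ s, HasDerivAt (fun s : ℝ => 2 * d * (x + s * d)) (2 * d * d) s := fun s => by
    simpa using (((hasDerivAt_id s).mul_const d).const_add x).const_mul (2 * d)
  have l2 : ∀ s, HasDerivAt (fun s : ℝ => 2 * d * (x + s * d) + 2 * (σ * d) * (y + s * (σ * d)))
      (2 * d * d + 2 * (σ * d) * (σ * d)) s := fun s =>
    ((l1 s).add
      ((((hasDerivAt_id s).mul_const (σ * d)).const_add y).const_mul (2 * (σ * d)))).congr_deriv
      (by simp)
  set c := 2 / (2 * r - 1) with hc
  have hd1 : ∀ s, HasDerivAt (fun s : ℝ => c * (ε + (x + s * d) ^ 2) ^ r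
      - (ε + (x + s * d) ^ 2 + (y + s * (σ * d)) ^ 2) ^ r)
      (c * ((2 * d * (x + s * d)) * r * (ε + (x + s * d) ^ 2) ^ (r - 1)) -
       (2 * d * (x + s * d) + 2 * (σ * d) * (y + s * (σ * d))) * r *
        (ε + (x + s * d) ^ 2 + (y + s * (σ * d)) ^ 2) ^ (r - 1)) s := fun s =>
    (((h1 s).rpow_const (Or.inl (p1 s).ne')).const_mul c).sub
      ((h2 s).rpow_const (Or.inl (p2 s).ne'))
  have hd2 := fun s => (((((l1 s).mul_const r).mul
      ((h1 s).rpow_const (p := r - 1) (Or.inl (p1 s).ne'))).const_mul c).sub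
      (((l2 s).mul_const r).mul ((h2 s).rpow_const (p := r - 1) (Or.inl (p2 s).ne'))))
  refine convexOn_of_hasDerivWithinAt2_nonneg convex_univ
    (fun s _ => (hd1 s).continuousAt.continuousWithinAt)
    (fun s _ => (hd1 s).hasDerivWithinAt) (fun s _ => (hd2 s).hasDerivWithinAt) ?_
  intro s _
  set w := ε + (x + s * d) ^ 2 with hw
  set v := ε + (x + s * d) ^ 2 + (y + s * (σ * d)) ^ 2 with hv
  have hwp : 0 < w := p1 s
  have hvp : 0 < v := p2 s
  have hwv : w ≤ v := by rw [hw, hv]; nlinarith [sq_nonneg (y + s * (σ * d))]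
  have e1 : w ^ (r - 1 - 1) = w ^ (r - 1) / w := by rw [Real.rpow_sub_one hwp.ne']
  have e2 : v ^ (r - 1 - 1) = v ^ (r - 1) / v := by rw [Real.rpow_sub_one hvp.ne']
  have hmono : v ^ (r - 1) ≤ w ^ (r - 1) :=
    Real.rpow_le_rpow_of_nonpos hwp hwv (by linarith)
  have W0 : 0 < w ^ (r - 1) := by positivity
  have V0 : 0 < v ^ (r - 1) := by positivity
  have hσ2 : σ ^ 2 ≤ 1 := by rw [← sq_abs]; nlinarith [abs_nonneg σ]
  have hr0 : 0 < 2 * r - 1 := by linarith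
  rw [e1, e2]
  set W := w ^ (r - 1)
  set V := v ^ (r - 1)
  have A : 2 * r * (2 * r - 1) * d ^ 2 * W ≤ 2 * d * d * r * W +
      2 * d * (x + s * d) * r * (2 * d * (x + s * d) * (r - 1) * (W / w)) := by
    have : (x + s * d) ^ 2 / w ≤ 1 := by rw [div_le_one hwp, hw]; linarith
    have h3 : 0 ≤ 4 * r * (1 - r) * d ^ 2 * W * (1 - (x + s * d) ^ 2 / w) := by
      have : 0 ≤ 1 - (x + s * d) ^ 2 / w := by linarith
      have : 0 ≤ 1 - r := by linarith
      have : 0 < r := by linarith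
      positivity
    have e : 2 * d * d * r * W +
      2 * d * (x + s * d) * r * (2 * d * (x + s * d) * (r - 1) * (W / w)) =
      2 * r * (2 * r - 1) * d ^ 2 * W +
        4 * r * (1 - r) * d ^ 2 * W * (1 - (x + s * d) ^ 2 / w) := by
      ring
    linarith
  have Bd : (2 * d * d + 2 * (σ * d) * (σ * d)) * r * V +
      (2 * d * (x + s * d) + 2 * (σ * d) * (y + s * (σ * d))) * r *
       ((2 * d * (x + s * d) + 2 * (σ * d) * (y + s * (σ * d))) * (r - 1) * (V / v)) ≤
      4 * r * d ^ 2 * W := by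
    have h3 : (2 * d * (x + s * d) + 2 * (σ * d) * (y + s * (σ * d))) * r *
       ((2 * d * (x + s * d) + 2 * (σ * d) * (y + s * (σ * d))) * (r - 1) * (V / v)) ≤ 0 := by
      have h4 : 0 ≤ (2 * d * (x + s * d) + 2 * (σ * d) * (y + s * (σ * d))) ^ 2 * r
        * (1 - r) * (V / v) := by
        have : 0 ≤ 1 - r := by linarith
        have : 0 < r := by linarith
        positivity
      linarith
    have h5 : (2 * d * d + 2 * (σ * d) * (σ * d)) * r * V ≤ 4 * r * d ^ 2 * V := by
      have : 0 ≤ (1 - σ ^ 2) * (2 * d ^ 2 * r * V) :=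
        mul_nonneg (by linarith) (by have : 0 < r := by linarith
                                     positivity)
      linarith
    have h6 : 4 * r * d ^ 2 * V ≤ 4 * r * d ^ 2 * W :=
      mul_le_mul_of_nonneg_left hmono (by have : 0 < r := by linarith
                                          positivity)
    linarith
  have hA := mul_le_mul_of_nonneg_left A (show 0 ≤ c by positivity)
  have : c * (2 * r * (2 * r - 1) * d ^ 2 * W) = 4 * r * d ^ 2 * W := by
    rw [hc]; field_simp; ring
  linarith

theorem convexOn_rpow_sub_rpow {p : ℝ} (hp : 1 < p) (hp2 : p ≤ 2)
    (x y d σ : ℝ) (hσ : |σ| ≤ 1) :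
    ConvexOn ℝ Set.univ (fun s : ℝ => 2 / (p - 1) * ((x + s * d) ^ 2) ^ (p / 2)
      - ((x + s * d) ^ 2 + (y + s * (σ * d)) ^ 2) ^ (p / 2)) := by
  have key : ∀ s : ℝ, Filter.Tendsto (fun ε : ℝ => 2 / (p - 1) * (ε + (x + s * d) ^ 2) ^ (p / 2)
      - (ε + (x + s * d) ^ 2 + (y + s * (σ * d)) ^ 2) ^ (p / 2)) (nhdsWithin 0 (Set.Ioi 0))
      (nhds (2 / (p - 1) * ((x + s * d) ^ 2) ^ (p / 2)
      - ((x + s * d) ^ 2 + (y + s * (σ * d)) ^ 2) ^ (p / 2))) := by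
    intro s
    have hc : Continuous (fun ε : ℝ => 2 / (p - 1) * (ε + (x + s * d) ^ 2) ^ (p / 2)
      - (ε + (x + s * d) ^ 2 + (y + s * (σ * d)) ^ 2) ^ (p / 2)) := by
      have h : 0 ≤ p / 2 := by linarith
      exact (((continuous_id.add continuous_const).rpow_const (fun _ => Or.inr h)).const_mul _).sub
        (((continuous_id.add continuous_const).add continuous_const).rpow_const
          (fun _ => Or.inr h))
    have := hc.tendsto 0
    simp only [zero_add] at this
    exact this.mono_left nhdsWithin_le_nhds
  refine ⟨convex_univ, fun s _ t _ a b ha hb hab => ?_⟩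
  refine le_of_tendsto_of_tendsto (key _) (((key s).const_mul a).add ((key t).const_mul b)) ?_
  filter_upwards [self_mem_nhdsWithin] with ε hε
  have := (convexOn_rpow_sub_rpow_regularized (r := p / 2) (by linarith) (by linarith) hε
    x y d σ hσ).2 (Set.mem_univ s) (Set.mem_univ t) ha hb hab
  simpa [mul_div_cancel₀] using this

/-- The Legendre transform in `y` of `(x ^ 2 + y ^ 2) ^ (p / 2) - 2 / (p - 1) * |x| ^ p`: an
explicit Bellman function for `1 < p ≤ 2`. -/
def bellman (p x η : ℝ) : ℝ :=
  ⨆ y : ℝ, (y * η + (2 / (p - 1) * (x ^ 2) ^ (p / 2) - (x ^ 2 + y ^ 2) ^ (p / 2)))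

theorem sq_rpow_half (x p : ℝ) : (x ^ 2) ^ (p / 2) = |x| ^ p := by
  rw [← sq_abs, ← Real.rpow_natCast, ← Real.rpow_mul (abs_nonneg x)]
  congr 1; push_cast; ring

theorem bellman_term_le {p q : ℝ} (hpq : p.HolderConjugate q) (x η y : ℝ) :
    y * η + (2 / (p - 1) * (x ^ 2) ^ (p / 2) - (x ^ 2 + y ^ 2) ^ (p / 2)) ≤
      2 / (p - 1) * |x| ^ p + |η| ^ q := by
  have h1 := Real.young_inequality y η hpq
  have h2 : |y| ^ p ≤ (x ^ 2 + y ^ 2) ^ (p / 2) := by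
    rw [← sq_rpow_half]
    exact Real.rpow_le_rpow (sq_nonneg _) (by nlinarith [sq_nonneg x]) (by linarith [hpq.lt])
  have h3 : |y| ^ p / p ≤ |y| ^ p := div_le_self (by positivity) hpq.lt.le
  have h4 : |η| ^ q / q ≤ |η| ^ q := div_le_self (by positivity) hpq.symm.lt.le
  rw [sq_rpow_half x]
  linarith

theorem bellman_term_bddAbove {p q : ℝ} (hpq : p.HolderConjugate q) (x η : ℝ) :
    BddAbove (Set.range fun y : ℝ =>
      (y * η + (2 / (p - 1) * (x ^ 2) ^ (p / 2) - (x ^ 2 + y ^ 2) ^ (p / 2)))) :=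
  ⟨_, by rintro _ ⟨y, rfl⟩; exact bellman_term_le hpq x η y⟩

theorem isBellman_bellman {p q : ℝ} (hpq : p.HolderConjugate q) (hp2 : p ≤ 2) :
    IsBellman p q (2 / (p - 1)) (bellman p) where
  convexOn := by
    refine ⟨convex_univ, fun z _ w _ a b ha hb hab => ciSup_le fun y => ?_⟩
    have h := (convexOn_rpow_sub_rpow hpq.lt hp2 0 y 1 0 (by simp)).2 (Set.mem_univ z.1)
      (Set.mem_univ w.1) ha hb hab
    have h1 := mul_le_mul_of_nonneg_left (le_ciSup (bellman_term_bddAbove hpq z.1 z.2) y) ha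
    have h2 := mul_le_mul_of_nonneg_left (le_ciSup (bellman_term_bddAbove hpq w.1 w.2) y) hb
    simp only [smul_eq_mul, zero_add, mul_one, mul_zero, add_zero, Prod.fst_add,
      Prod.snd_add, Prod.smul_fst, Prod.smul_snd] at h ⊢
    unfold bellman
    linarith
  add_mul_le_midpoint x η a b σ hσ := by
    suffices h : bellman p x η ≤
        (bellman p (x + a) (η + b) + bellman p (x - a) (η - b)) / 2 - σ * (a * b) by linarith
    refine ciSup_le fun y => ?_
    have h := (convexOn_rpow_sub_rpow hpq.lt hp2 x y a σ hσ).2 (Set.mem_univ 1)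
      (Set.mem_univ (-1)) (show (0 : ℝ) ≤ 1 / 2 by norm_num) (show (0 : ℝ) ≤ 1 / 2 by norm_num)
      (by norm_num)
    have h1 := le_ciSup (bellman_term_bddAbove hpq (x + a) (η + b)) (y + σ * a)
    have h2 := le_ciSup (bellman_term_bddAbove hpq (x - a) (η - b)) (y - σ * a)
    simp only [smul_eq_mul, mul_one, one_mul, mul_neg, add_neg_cancel, zero_mul, add_zero,
      neg_mul, ← sub_eq_add_neg] at h
    norm_num at h
    unfold bellman
    linarith
  nonneg x η := by
    refine le_trans ?_ (le_ciSup (bellman_term_bddAbove hpq x η) 0)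
    have : 1 ≤ 2 / (p - 1) := by rw [le_div_iff₀ (by linarith [hpq.lt])]; linarith
    have h0 : 0 ≤ (x ^ 2) ^ (p / 2) := by positivity
    simp
    nlinarith
  le_rpow x η := by
    refine ciSup_le fun y => (bellman_term_le hpq x η y).trans ?_
    have : 1 ≤ 2 / (p - 1) := by rw [le_div_iff₀ (by linarith [hpq.lt])]; linarith
    have h0 : 0 ≤ |η| ^ q := by positivity
    nlinarith

theorem exists_isBellman {p q : ℝ} (hpq : p.HolderConjugate q) :
    ∃ C B, 0 < C ∧ IsBellman p q C B := by
  rcases le_total p 2 with h | h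
  · exact ⟨_, _, div_pos two_pos (by linarith [hpq.lt]), isBellman_bellman hpq h⟩
  · have hq : q ≤ 2 := by
      have := hpq.inv_add_inv_eq_one
      have h1 : p⁻¹ ≤ 2⁻¹ := inv_anti₀ two_pos h
      have h2 : (2 : ℝ)⁻¹ ≤ q⁻¹ := by linarith
      exact (inv_le_inv₀ two_pos hpq.symm.pos).1 h2
    exact ⟨_, _, div_pos two_pos (by linarith [hpq.symm.lt]),
      (isBellman_bellman hpq.symm hq).swap⟩

theorem IsBellman.continuous {p q C : ℝ} {B : ℝ → ℝ → ℝ} (hB : IsBellman p q C B) :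
    Continuous (fun z : ℝ × ℝ => B z.1 z.2) :=
  continuousOn_univ.1 (hB.convexOn.continuousOn isOpen_univ)

theorem IsBellman.integrable_comp {p q C : ℝ} {B : ℝ → ℝ → ℝ} (hB : IsBellman p q C B)
    {α : Type*} [MeasurableSpace α] {μ : Measure α} (hp : 0 < p) (hq : 0 < q) {u φ : α → ℝ}
    (hu : MemLp u (ENNReal.ofReal p) μ) (hφ : MemLp φ (ENNReal.ofReal q) μ) :
    Integrable (fun x => B (u x) (φ x)) μ := by
  have h1 := hu.integrable_norm_rpow (by simpa using hp) (by simp)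
  have h2 := hφ.integrable_norm_rpow (by simpa using hq) (by simp)
  rw [ENNReal.toReal_ofReal hp.le] at h1
  rw [ENNReal.toReal_ofReal hq.le] at h2
  refine ((h1.add h2).const_mul C).mono'
    (hB.continuous.comp_aestronglyMeasurable (hu.1.prodMk hφ.1)) (ae_of_all _ fun x => ?_)
  rw [Real.norm_of_nonneg (hB.nonneg _ _)]
  exact hB.le_rpow _ _

section StepAvg

variable {V : Type*} [NormedAddCommGroup V] {ι : Type*} [Fintype ι]

/-- One step of the symmetric random walk with steps `± e i`, acting on functions. -/
def stepAvg (e : ι → V) (f : V → ℝ) (x : V) : ℝ :=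
  ∑ i, (Fintype.card ι : ℝ)⁻¹ * ((f (x + e i) + f (x - e i)) / 2)

/-- The symmetric difference in direction `a`. -/
def centralDiff (a : V) (f : V → ℝ) (x : V) : ℝ := f (x + a) - f (x - a)

theorem IsBellman.stepAvg_le [Nonempty ι] {p q C : ℝ} {B : ℝ → ℝ → ℝ} (hB : IsBellman p q C B)
    (e : ι → V) (σ : ι → ℝ) (hσ : ∀ i, |σ i| ≤ 1) (u φ : V → ℝ) (x : V) :
    B (stepAvg e u x) (stepAvg e φ x) ≤ ∑ i, (Fintype.card ι : ℝ)⁻¹ *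
      ((B (u (x + e i)) (φ (x + e i)) + B (u (x - e i)) (φ (x - e i))) / 2
        - σ i / 4 * (centralDiff (e i) u x * centralDiff (e i) φ x)) := by
  have h := hB.convexOn.map_sum_le (t := Finset.univ) (w := fun _ : ι => (Fintype.card ι : ℝ)⁻¹)
    (p := fun i => ((u (x + e i) + u (x - e i)) / 2, (φ (x + e i) + φ (x - e i)) / 2))
    (fun _ _ => by positivity) (by simp) (fun _ _ => Set.mem_univ _)
  simp only [Prod.fst_sum, Prod.snd_sum, Prod.smul_fst, Prod.smul_snd, smul_eq_mul] at h
  refine h.trans (Finset.sum_le_sum fun i _ => mul_le_mul_of_nonneg_left ?_ (by positivity))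
  have h2 := hB.add_mul_le_midpoint ((u (x + e i) + u (x - e i)) / 2)
    ((φ (x + e i) + φ (x - e i)) / 2) ((u (x + e i) - u (x - e i)) / 2)
    ((φ (x + e i) - φ (x - e i)) / 2) (σ i) (hσ i)
  have e1 : ∀ a b : ℝ, (a + b) / 2 + (a - b) / 2 = a := fun a b => by ring
  have e2 : ∀ a b : ℝ, (a + b) / 2 - (a - b) / 2 = b := fun a b => by ring
  rw [e1, e2, e1, e2] at h2
  unfold centralDiff
  linarith

variable [MeasurableSpace V] [BorelSpace V] {μ : Measure V} [μ.IsAddHaarMeasure]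

theorem memLp_stepAvg {f : V → ℝ} {p : ENNReal} (hf : MemLp f p μ) (e : ι → V) :
    MemLp (stepAvg e f) p μ := by
  unfold stepAvg
  refine memLp_finsetSum _ fun i _ => MemLp.const_mul ?_ _
  simpa [div_eq_inv_mul] using
    ((hf.comp_measurePreserving (measurePreserving_add_right μ (e i))).add
      (hf.comp_measurePreserving (measurePreserving_sub_right μ (e i)))).const_mul (2 : ℝ)⁻¹

theorem memLp_centralDiff {f : V → ℝ} {p : ENNReal} (hf : MemLp f p μ) (a : V) :
    MemLp (centralDiff a f) p μ :=
  (hf.comp_measurePreserving (measurePreserving_add_right μ a)).sub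
    (hf.comp_measurePreserving (measurePreserving_sub_right μ a))

theorem memLp_stepAvg_iterate {f : V → ℝ} {p : ENNReal} (hf : MemLp f p μ)
    (e : ι → V) (n : ℕ) : MemLp ((stepAvg e)^[n] f) p μ := by
  induction n with
  | zero => exact hf
  | succ n ih => rw [Function.iterate_succ_apply']; exact memLp_stepAvg ih e

theorem IsBellman.integral_stepAvg_le [Nonempty ι] {p q C : ℝ} {B : ℝ → ℝ → ℝ}
    (hB : IsBellman p q C B) (hpq : p.HolderConjugate q)
    (e : ι → V) (σ : ι → ℝ) (hσ : ∀ i, |σ i| ≤ 1) {u φ : V → ℝ}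
    (hu : MemLp u (ENNReal.ofReal p) μ) (hφ : MemLp φ (ENNReal.ofReal q) μ) :
    ∫ x, B (stepAvg e u x) (stepAvg e φ x) ∂μ + ∑ i, (Fintype.card ι : ℝ)⁻¹ *
      (σ i / 4 * ∫ x, centralDiff (e i) u x * centralDiff (e i) φ x ∂μ) ≤
        ∫ x, B (u x) (φ x) ∂μ := by
  have hI := hB.integrable_comp hpq.pos hpq.symm.pos hu hφ
  have := hpq.ennrealOfReal
  have hD : ∀ i, Integrable (fun x => centralDiff (e i) u x * centralDiff (e i) φ x) μ := fun i =>
    (memLp_centralDiff hu (e i)).integrable_mul (memLp_centralDiff hφ (e i))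
  have hA : ∀ i, Integrable (fun x => (B (u (x + e i)) (φ (x + e i)) +
      B (u (x - e i)) (φ (x - e i))) / 2) μ := fun i =>
    ((hI.comp_add_right (e i)).add (hI.comp_sub_right (e i))).div_const 2
  have hAi : ∀ i, ∫ x, (B (u (x + e i)) (φ (x + e i)) +
      B (u (x - e i)) (φ (x - e i))) / 2 ∂μ = ∫ x, B (u x) (φ x) ∂μ := fun i => by
    rw [integral_div, integral_add (hI.comp_add_right (e i)) (hI.comp_sub_right (e i)),
      integral_add_right_eq_self (fun x => B (u x) (φ x)),
      integral_sub_right_eq_self (fun x => B (u x) (φ x))]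
    ring
  have h := integral_mono (hB.integrable_comp hpq.pos hpq.symm.pos (memLp_stepAvg hu e)
    (memLp_stepAvg hφ e))
    (integrable_finsetSum Finset.univ fun i _ =>
      ((hA i).sub ((hD i).const_mul (σ i / 4))).const_mul (Fintype.card ι : ℝ)⁻¹)
    (fun x => hB.stepAvg_le e σ hσ u φ x)
  rw [integral_finsetSum _ fun i _ =>
      ((hA i).sub ((hD i).const_mul (σ i / 4))).const_mul (Fintype.card ι : ℝ)⁻¹] at h
  have h3 : ∀ i, ∫ x, (Fintype.card ι : ℝ)⁻¹ * (((fun x => (B (u (x + e i)) (φ (x + e i)) +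
      B (u (x - e i)) (φ (x - e i))) / 2) - fun x => σ i / 4 *
        (centralDiff (e i) u x * centralDiff (e i) φ x)) x) ∂μ =
      (Fintype.card ι : ℝ)⁻¹ * (∫ x, B (u x) (φ x) ∂μ) - (Fintype.card ι : ℝ)⁻¹ *
      (σ i / 4 * ∫ x, centralDiff (e i) u x * centralDiff (e i) φ x ∂μ) := fun i => by
    rw [integral_const_mul, integral_sub' (hA i) ((hD i).const_mul _), hAi, integral_const_mul,
      mul_sub]
  rw [Finset.sum_congr rfl fun i _ => h3 i, Finset.sum_sub_distrib] at h
  simp only [Finset.sum_const, Finset.card_univ, nsmul_eq_mul, ← mul_assoc] at h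
  rw [mul_inv_cancel₀ (by positivity), one_mul] at h
  simp only [← mul_assoc] at h ⊢
  linarith

theorem IsBellman.sum_integral_centralDiff_le [Nonempty ι] {p q C : ℝ} {B : ℝ → ℝ → ℝ}
    (hB : IsBellman p q C B) (hpq : p.HolderConjugate q)
    (e : ι → V) (σ : ι → ℝ) (hσ : ∀ i, |σ i| ≤ 1) {u φ : V → ℝ}
    (hu : MemLp u (ENNReal.ofReal p) μ) (hφ : MemLp φ (ENNReal.ofReal q) μ) (N : ℕ) :
    ∑ n ∈ Finset.range N, ∑ i, (Fintype.card ι : ℝ)⁻¹ *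
      (σ i / 4 * ∫ x, centralDiff (e i) ((stepAvg e)^[n] u) x *
        centralDiff (e i) ((stepAvg e)^[n] φ) x ∂μ) ≤ ∫ x, B (u x) (φ x) ∂μ := by
  suffices h : ∫ x, B ((stepAvg e)^[N] u x) ((stepAvg e)^[N] φ x) ∂μ +
      ∑ n ∈ Finset.range N, ∑ i, (Fintype.card ι : ℝ)⁻¹ *
      (σ i / 4 * ∫ x, centralDiff (e i) ((stepAvg e)^[n] u) x *
        centralDiff (e i) ((stepAvg e)^[n] φ) x ∂μ) ≤ ∫ x, B (u x) (φ x) ∂μ by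
    have : 0 ≤ ∫ x, B ((stepAvg e)^[N] u x) ((stepAvg e)^[N] φ x) ∂μ :=
      integral_nonneg fun x => hB.nonneg _ _
    linarith
  induction N with
  | zero => simp
  | succ N ih =>
    have := hB.integral_stepAvg_le hpq e σ hσ (memLp_stepAvg_iterate hu e N)
      (memLp_stepAvg_iterate hφ e N)
    rw [Finset.sum_range_succ]
    simp only [Function.iterate_succ_apply']
    linarith

end StepAvg

section FourierWalk

open scoped FourierTransform RealInnerProductSpace

variable {V : Type*} [NormedAddCommGroup V] [InnerProductSpace ℝ V] {ι : Type*} [Fintype ι]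

/-- The Fourier symbol of `stepAvg e`. -/
def stepSymbol (e : ι → V) (ξ : V) : ℝ :=
  ∑ i, (Fintype.card ι : ℝ)⁻¹ * Real.cos (2 * Real.pi * ⟪e i, ξ⟫)

theorem fourierChar_mul_cos (x v : V) (ξ : V) :
    ((Real.fourierChar ⟪ξ, x + v⟫ : ℂ) + (Real.fourierChar ⟪ξ, x - v⟫ : ℂ)) / 2 =
      (Real.fourierChar ⟪ξ, x⟫ : ℂ) * (Real.cos (2 * Real.pi * ⟪v, ξ⟫) : ℂ) := by
  simp only [Real.fourierChar_apply, inner_add_right, inner_sub_right, Complex.ofReal_cos,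
    Complex.cos, mul_div_assoc', mul_add, ← Complex.exp_add, real_inner_comm v ξ]
  push_cast
  ring_nf

theorem fourierChar_mul_sin (x v : V) (ξ : V) :
    (Real.fourierChar ⟪ξ, x + v⟫ : ℂ) - (Real.fourierChar ⟪ξ, x - v⟫ : ℂ) =
      (Real.fourierChar ⟪ξ, x⟫ : ℂ) * (2 * Complex.I * Real.sin (2 * Real.pi * ⟪v, ξ⟫)) := by
  have h : ∀ t : ℂ, 2 * Complex.I * Complex.sin t =
      Complex.exp (t * Complex.I) - Complex.exp (-t * Complex.I) := fun t => by
    rw [Complex.sin]; linear_combination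
      (Complex.exp (-t * Complex.I) - Complex.exp (t * Complex.I)) * Complex.I_sq
  simp only [Real.fourierChar_apply, inner_add_right, inner_sub_right, Complex.ofReal_sin, h,
    mul_sub, ← Complex.exp_add, real_inner_comm v ξ]
  push_cast
  ring_nf

theorem abs_stepSymbol_le [Nonempty ι] (e : ι → V) (ξ : V) : |stepSymbol e ξ| ≤ 1 := by
  refine (Finset.abs_sum_le_sum_abs _ _).trans ?_
  calc _ ≤ ∑ _i : ι, (Fintype.card ι : ℝ)⁻¹ := by
        refine Finset.sum_le_sum fun i _ => ?_
        rw [abs_mul, abs_of_nonneg (by positivity)]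
        exact mul_le_of_le_one_right (by positivity) (Real.abs_cos_le_one _)
    _ = 1 := by simp

@[fun_prop]
theorem continuous_stepSymbol (e : ι → V) : Continuous (stepSymbol e) := by
  unfold stepSymbol
  fun_prop

variable [FiniteDimensional ℝ V] [MeasurableSpace V] [BorelSpace V]

theorem integrable_fourierChar_mul {a : V → ℂ} (ha : Integrable a) (x : V) :
    Integrable (fun ξ => (Real.fourierChar ⟪ξ, x⟫ : ℂ) * a ξ) := by
  refine ha.bdd_mul (c := 1) (by fun_prop) (ae_of_all _ fun ξ => ?_)
  rw [Circle.norm_coe]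

theorem fourierInv_eq_mul (a : V → ℂ) (x : V) :
    𝓕⁻ a x = ∫ ξ, (Real.fourierChar ⟪ξ, x⟫ : ℂ) * a ξ := by
  rw [Real.fourierInv_eq]; rfl

theorem ofReal_stepAvg {u : V → ℝ} {a : V → ℂ} (ha : Integrable a)
    (hu : ∀ x, (u x : ℂ) = 𝓕⁻ a x) (e : ι → V) (x : V) :
    (stepAvg e u x : ℂ) = 𝓕⁻ (fun ξ => (stepSymbol e ξ : ℂ) * a ξ) x := by
  have hi := fun y => integrable_fourierChar_mul ha y
  simp only [stepAvg, stepSymbol, fourierInv_eq_mul]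
  push_cast
  simp only [hu, fourierInv_eq_mul, ← integral_add (hi _) (hi _), ← integral_div,
    ← integral_const_mul]
  rw [← integral_finsetSum]
  · refine integral_congr_ae (ae_of_all _ fun ξ => ?_)
    simp only [Finset.sum_mul, Finset.mul_sum]
    refine Finset.sum_congr rfl fun i _ => ?_
    have := fourierChar_mul_cos x (e i) ξ
    push_cast at this
    linear_combination ((Fintype.card ι : ℂ)⁻¹ * a ξ) * this
  · exact fun i _ => (((hi _).add (hi _)).div_const 2).const_mul _

theorem ofReal_centralDiff {u : V → ℝ} {a : V → ℂ} (ha : Integrable a)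
    (hu : ∀ x, (u x : ℂ) = 𝓕⁻ a x) (v x : V) :
    (centralDiff v u x : ℂ) =
      𝓕⁻ (fun ξ => (2 * Complex.I * Real.sin (2 * Real.pi * ⟪v, ξ⟫)) * a ξ) x := by
  have hi := fun y => integrable_fourierChar_mul ha y
  simp only [centralDiff, fourierInv_eq_mul]
  rw [Complex.ofReal_sub, hu, hu, fourierInv_eq_mul, fourierInv_eq_mul,
    ← integral_sub (hi _) (hi _)]
  refine integral_congr_ae (ae_of_all _ fun ξ => ?_)
  simp only
  rw [← sub_mul, fourierChar_mul_sin, mul_assoc]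

theorem integrable_bdd_mul {m : V → ℝ} (hm : Continuous m) (hm1 : ∀ ξ, |m ξ| ≤ 1) {a : V → ℂ}
    (ha : Integrable a) : Integrable (fun ξ => (m ξ : ℂ) * a ξ) :=
  ha.bdd_mul (c := 1) (by fun_prop) (ae_of_all _ fun ξ => by simpa using hm1 ξ)

theorem ofReal_stepAvg_iterate [Nonempty ι] {u : V → ℝ} {a : V → ℂ} (ha : Integrable a)
    (hu : ∀ x, (u x : ℂ) = 𝓕⁻ a x) (e : ι → V) (n : ℕ) (x : V) :
    ((stepAvg e)^[n] u x : ℂ) = 𝓕⁻ (fun ξ => (stepSymbol e ξ : ℂ) ^ n * a ξ) x := by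
  induction n generalizing x with
  | zero => simpa using hu x
  | succ n ih =>
    have h1 : Integrable (fun ξ => (stepSymbol e ξ : ℂ) ^ n * a ξ) := by
      have := integrable_bdd_mul (m := fun ξ => stepSymbol e ξ ^ n) (by fun_prop)
        (fun ξ => by rw [abs_pow]; exact pow_le_one₀ (abs_nonneg _) (abs_stepSymbol_le e ξ)) ha
      simpa using this
    rw [Function.iterate_succ_apply', ofReal_stepAvg h1 ih]
    refine congrFun (congrArg 𝓕⁻ (funext fun ξ => ?_)) x
    ring

theorem fourierInv_comp_add (φ : V → ℂ) (v ξ : V) :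
    𝓕⁻ (fun x => φ (x + v)) ξ = (Real.fourierChar (-⟪v, ξ⟫) : ℂ) * 𝓕⁻ φ ξ := by
  rw [fourierInv_eq_mul, fourierInv_eq_mul, ← integral_const_mul,
    ← integral_add_right_eq_self (fun x => _ * (_ * φ x)) v]
  refine integral_congr_ae (ae_of_all _ fun x => ?_)
  simp only [inner_add_left, ← mul_assoc]
  rw [← Circle.coe_mul, ← AddChar.map_add_eq_mul]
  congr 3
  ring

theorem fourierInv_stepAvg {φ : V → ℝ} (hφ : Integrable φ) (e : ι → V) (ξ : V) :
    𝓕⁻ (fun x => (stepAvg e φ x : ℂ)) ξ = stepSymbol e ξ * 𝓕⁻ (fun x => (φ x : ℂ)) ξ := by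
  have hi : ∀ v : V, Integrable fun x => (Real.fourierChar ⟪x, ξ⟫ : ℂ) * (φ (x + v) : ℂ) :=
    fun v => integrable_fourierChar_mul (hφ.comp_add_right v).ofReal ξ
  have key : ∀ v : V, (𝓕⁻ (fun x => (φ (x + v) : ℂ)) ξ + 𝓕⁻ (fun x => (φ (x - v) : ℂ)) ξ) / 2 =
      Real.cos (2 * Real.pi * ⟪v, ξ⟫) * 𝓕⁻ (fun x => (φ x : ℂ)) ξ := by
    intro v
    have h1 := fourierInv_comp_add (fun x => (φ x : ℂ)) v ξ
    have h2 := fourierInv_comp_add (fun x => (φ x : ℂ)) (-v) ξ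
    have h3 := fourierChar_mul_cos (0 : V) v ξ
    simp only [← sub_eq_add_neg] at h2
    rw [h1, h2]
    simp only [zero_add, zero_sub, inner_zero_right, inner_neg_right, inner_neg_left, neg_neg,
      AddChar.map_zero_eq_one, Circle.coe_one, one_mul] at h3 ⊢
    rw [← h3, real_inner_comm v ξ]
    ring
  have hj : ∀ v : V, Integrable fun x => (Real.fourierChar ⟪x, ξ⟫ : ℂ) * (φ (x - v) : ℂ) :=
    fun v => by simpa only [← sub_eq_add_neg] using hi (-v)
  have hsum : (stepSymbol e ξ : ℂ) * 𝓕⁻ (fun x => (φ x : ℂ)) ξ =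
      ∑ i, (Fintype.card ι : ℂ)⁻¹ * ((𝓕⁻ (fun x => (φ (x + e i) : ℂ)) ξ +
        𝓕⁻ (fun x => (φ (x - e i) : ℂ)) ξ) / 2) := by
    rw [stepSymbol, Complex.ofReal_sum, Finset.sum_mul]
    refine Finset.sum_congr rfl fun i _ => ?_
    rw [key, ← mul_assoc]
    simp
  rw [hsum]
  simp only [fourierInv_eq_mul, ← integral_add (hi _) (hj _), ← integral_div,
    ← integral_const_mul]
  refine Eq.trans ?_ (integral_finsetSum _ fun i _ =>
    (((hi (e i)).add (hj (e i))).div_const 2).const_mul (Fintype.card ι : ℂ)⁻¹)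
  refine integral_congr_ae (ae_of_all _ fun x => ?_)
  simp only [stepAvg]
  push_cast
  rw [Finset.mul_sum]
  exact Finset.sum_congr rfl fun i _ => by ring

theorem fourierInv_centralDiff {φ : V → ℝ} (hφ : Integrable φ) (v ξ : V) :
    𝓕⁻ (fun x => (centralDiff v φ x : ℂ)) ξ =
      -(2 * Complex.I * Real.sin (2 * Real.pi * ⟪v, ξ⟫)) * 𝓕⁻ (fun x => (φ x : ℂ)) ξ := by
  have hi : ∀ v : V, Integrable fun x => (Real.fourierChar ⟪x, ξ⟫ : ℂ) * (φ (x + v) : ℂ) :=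
    fun v => integrable_fourierChar_mul (hφ.comp_add_right v).ofReal ξ
  have h1 := fourierInv_comp_add (fun x => (φ x : ℂ)) v ξ
  have h2 := fourierInv_comp_add (fun x => (φ x : ℂ)) (-v) ξ
  have h3 := fourierChar_mul_sin (0 : V) v ξ
  have h4 := hi (-v)
  simp only [← sub_eq_add_neg] at h2 h4
  simp only [zero_add, zero_sub, inner_zero_right, inner_neg_right,
      AddChar.map_zero_eq_one, Circle.coe_one, one_mul] at h3
  rw [← h3]
  rw [inner_neg_left, neg_neg] at h2
  have : 𝓕⁻ (fun x => (centralDiff v φ x : ℂ)) ξ =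
      𝓕⁻ (fun x => (φ (x + v) : ℂ)) ξ - 𝓕⁻ (fun x => (φ (x - v) : ℂ)) ξ := by
    rw [fourierInv_eq_mul, fourierInv_eq_mul, fourierInv_eq_mul, ← integral_sub (hi v) h4]
    refine integral_congr_ae (ae_of_all _ fun x => ?_)
    simp only [centralDiff]
    push_cast
    ring
  rw [this, h1, h2, real_inner_comm v ξ]
  ring

theorem integral_fourierInv_mul_eq_flip {a b : V → ℂ} (ha : Integrable a) (hb : Integrable b) :
    ∫ x, 𝓕⁻ a x * b x = ∫ ξ, a ξ * 𝓕⁻ b ξ := by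
  have h := VectorFourier.integral_fourierIntegral_smul_eq_flip (L := -innerₗ V)
    Real.continuous_fourierChar (by simp; fun_prop) ha hb
  have e1 : ∀ (f : V → ℂ) x,
      VectorFourier.fourierIntegral Real.fourierChar volume (-innerₗ V) f x = 𝓕⁻ f x := by
    intro f x
    rw [Real.fourierInv_eq, VectorFourier.fourierIntegral]
    simp
  have e2 : ∀ (f : V → ℂ) x,
      VectorFourier.fourierIntegral Real.fourierChar volume (-innerₗ V).flip f x = 𝓕⁻ f x := by
    intro f x
    rw [Real.fourierInv_eq, VectorFourier.fourierIntegral]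
    simp [real_inner_comm]
  simpa only [e1, e2, smul_eq_mul] using h

theorem fourierInv_stepAvg_iterate {φ : V → ℝ} (hφ : Integrable φ) (e : ι → V) (n : ℕ) (ξ : V) :
    𝓕⁻ (fun x => ((stepAvg e)^[n] φ x : ℂ)) ξ =
      (stepSymbol e ξ : ℂ) ^ n * 𝓕⁻ (fun x => (φ x : ℂ)) ξ := by
  induction n with
  | zero => simp
  | succ n ih =>
    have h1 : Integrable ((stepAvg e)^[n] φ) :=
      memLp_one_iff_integrable.1 (memLp_stepAvg_iterate (memLp_one_iff_integrable.2 hφ) e n)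
    simp only [Function.iterate_succ_apply']
    rw [fourierInv_stepAvg h1, ih]
    ring

theorem integral_centralDiff_mul_centralDiff [Nonempty ι] {u φ : V → ℝ} {a : V → ℂ}
    (ha : Integrable a) (hu : ∀ x, (u x : ℂ) = 𝓕⁻ a x) (hφ : Integrable φ) (e : ι → V) (v : V)
    (n : ℕ) :
    ((∫ x, centralDiff v ((stepAvg e)^[n] u) x * centralDiff v ((stepAvg e)^[n] φ) x : ℝ) : ℂ) =
      ∫ ξ, ((4 * Real.sin (2 * Real.pi * ⟪v, ξ⟫) ^ 2 * (stepSymbol e ξ ^ 2) ^ n : ℝ) : ℂ) *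
        (a ξ * 𝓕⁻ (fun x => (φ x : ℂ)) ξ) := by
  have h1 : Integrable (fun ξ => (stepSymbol e ξ : ℂ) ^ n * a ξ) := by
    have := integrable_bdd_mul (m := fun ξ => stepSymbol e ξ ^ n) (by fun_prop)
      (fun ξ => by rw [abs_pow]; exact pow_le_one₀ (abs_nonneg _) (abs_stepSymbol_le e ξ)) ha
    simpa using this
  have h2 : Integrable (fun ξ => (2 * Complex.I * Real.sin (2 * Real.pi * ⟪v, ξ⟫)) *
      ((stepSymbol e ξ : ℂ) ^ n * a ξ)) := by
    have := (integrable_bdd_mul (m := fun ξ => Real.sin (2 * Real.pi * ⟪v, ξ⟫)) (by fun_prop)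
      (fun ξ => Real.abs_sin_le_one _) h1).const_mul (2 * Complex.I)
    simpa only [mul_assoc] using this
  have h3 : Integrable ((stepAvg e)^[n] φ) :=
    memLp_one_iff_integrable.1 (memLp_stepAvg_iterate (memLp_one_iff_integrable.2 hφ) e n)
  have h4 : Integrable fun x => (centralDiff v ((stepAvg e)^[n] φ) x : ℂ) :=
    (memLp_one_iff_integrable.1 (memLp_centralDiff (memLp_one_iff_integrable.2 h3) v)).ofReal
  rw [← integral_complex_ofReal]
  simp only [Complex.ofReal_mul]
  simp only [ofReal_centralDiff h1 (ofReal_stepAvg_iterate ha hu e n)]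
  rw [integral_fourierInv_mul_eq_flip h2 h4]
  refine integral_congr_ae (ae_of_all _ fun ξ => ?_)
  simp only
  rw [fourierInv_centralDiff h3, fourierInv_stepAvg_iterate hφ]
  push_cast
  rw [← pow_mul, mul_comm 2 n, pow_mul]
  linear_combination (-4 * Complex.sin (2 * Real.pi * ⟪v, ξ⟫) ^ 2 * (stepSymbol e ξ : ℂ) ^ n *
    (stepSymbol e ξ : ℂ) ^ n * a ξ * 𝓕⁻ (fun x => (φ x : ℂ)) ξ) * Complex.I_sq

end FourierWalk

section RieszSymbol

open scoped FourierTransform RealInnerProductSpace Topology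
open Filter

variable {V : Type*} [NormedAddCommGroup V] [InnerProductSpace ℝ V] {ι : Type*} [Fintype ι]

/-- The weighted average over the steps `e i` of the squared sines occurring in the symbols of the
central differences. -/
def sinSqAvg (σ : ι → ℝ) (e : ι → V) (ξ : V) : ℝ :=
  ∑ i, (Fintype.card ι : ℝ)⁻¹ * (σ i * Real.sin (2 * Real.pi * ⟪e i, ξ⟫) ^ 2)

@[fun_prop]
theorem continuous_sinSqAvg (σ : ι → ℝ) (e : ι → V) : Continuous (sinSqAvg σ e) := by
  unfold sinSqAvg
  fun_prop

theorem abs_sinSqAvg_le [Nonempty ι] (σ : ι → ℝ) (hσ : ∀ i, |σ i| ≤ 1) (e : ι → V) (ξ : V) :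
    |sinSqAvg σ e ξ| ≤ 1 - stepSymbol e ξ ^ 2 := by
  have hc : ∑ _i : ι, (Fintype.card ι : ℝ)⁻¹ = 1 := by simp
  have h1 : stepSymbol e ξ ^ 2 ≤
      ∑ i, (Fintype.card ι : ℝ)⁻¹ * Real.cos (2 * Real.pi * ⟪e i, ξ⟫) ^ 2 :=
    Real.pow_arith_mean_le_arith_mean_pow_of_even _ _ _ (fun i _ => by positivity) hc even_two
  calc |sinSqAvg σ e ξ| ≤ ∑ i, (Fintype.card ι : ℝ)⁻¹ *
        (1 - Real.cos (2 * Real.pi * ⟪e i, ξ⟫) ^ 2) := by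
        refine (Finset.abs_sum_le_sum_abs _ _).trans (Finset.sum_le_sum fun i _ => ?_)
        rw [abs_mul, abs_of_nonneg (by positivity), abs_mul, abs_of_nonneg (sq_nonneg (Real.sin _)),
          ← Real.sin_sq]
        exact mul_le_mul_of_nonneg_left (mul_le_of_le_one_left (sq_nonneg _) (hσ i))
          (by positivity)
    _ = 1 - ∑ i, (Fintype.card ι : ℝ)⁻¹ * Real.cos (2 * Real.pi * ⟪e i, ξ⟫) ^ 2 := by
        simp only [mul_sub, mul_one, Finset.sum_sub_distrib, hc]
    _ ≤ _ := by linarith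

theorem abs_sinSqAvg_mul_geom_le [Nonempty ι] (σ : ι → ℝ) (hσ : ∀ i, |σ i| ≤ 1) (e : ι → V)
    (ξ : V) (N : ℕ) :
    |sinSqAvg σ e ξ * ∑ n ∈ Finset.range N, (stepSymbol e ξ ^ 2) ^ n| ≤ 1 := by
  rw [abs_mul, abs_of_nonneg (a := ∑ n ∈ Finset.range N, _) (by positivity)]
  calc _ ≤ (1 - stepSymbol e ξ ^ 2) * ∑ n ∈ Finset.range N, (stepSymbol e ξ ^ 2) ^ n :=
        mul_le_mul_of_nonneg_right (abs_sinSqAvg_le σ hσ e ξ) (by positivity)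
    _ = 1 - (stepSymbol e ξ ^ 2) ^ N := by rw [mul_comm, geom_sum_mul_neg]
    _ ≤ 1 := by linarith [pow_nonneg (sq_nonneg (stepSymbol e ξ)) N]

theorem tendsto_sinSqAvg_mul_geom [Nonempty ι] (σ : ι → ℝ) (hσ : ∀ i, |σ i| ≤ 1) (e : ι → V)
    (ξ : V) :
    Tendsto (fun N : ℕ => sinSqAvg σ e ξ * ∑ n ∈ Finset.range N, (stepSymbol e ξ ^ 2) ^ n) atTop
      (𝓝 (sinSqAvg σ e ξ / (1 - stepSymbol e ξ ^ 2))) := by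
  have h1 := abs_sinSqAvg_le σ hσ e ξ
  rcases eq_or_lt_of_le ((abs_nonneg _).trans h1) with h | h
  · have h0 : sinSqAvg σ e ξ = 0 := abs_nonpos_iff.1 (by linarith)
    simp [h0]
  · rw [div_eq_mul_inv]
    exact ((hasSum_geometric_of_lt_one (sq_nonneg _) (by linarith)).tendsto_sum_nat).const_mul _

theorem abs_sinSqAvg_div_le [Nonempty ι] (σ : ι → ℝ) (hσ : ∀ i, |σ i| ≤ 1) (e : ι → V)
    (ξ : V) : |sinSqAvg σ e ξ / (1 - stepSymbol e ξ ^ 2)| ≤ 1 := by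
  have h1 := abs_sinSqAvg_le σ hσ e ξ
  rw [abs_div, abs_of_nonneg ((abs_nonneg _).trans h1)]
  exact div_le_one_of_le₀ h1 ((abs_nonneg _).trans h1)

theorem tendsto_sin_mul_div (k : ℝ) :
    Tendsto (fun h : ℝ => Real.sin (h * k) / h) (𝓝[≠] 0) (𝓝 k) := by
  have : HasDerivAt (fun h : ℝ => Real.sin (h * k)) k 0 := by
    simpa using (hasDerivAt_mul_const (x := (0 : ℝ)) k).sin
  have := this.tendsto_slope_zero
  simpa [div_eq_inv_mul] using this

/-- The symbol of the random walk transform converges as the step size tends to zero. -/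
theorem tendsto_sinSqAvg_div [Nonempty ι] (σ : ι → ℝ) (e : ι → V) (ξ : V)
    (hξ : ∑ i, ⟪e i, ξ⟫ ^ 2 ≠ 0) :
    Tendsto (fun h : ℝ => sinSqAvg σ (fun i => h • e i) ξ /
        (1 - stepSymbol (fun i => h • e i) ξ ^ 2)) (𝓝[≠] 0)
      (𝓝 ((∑ i, σ i * ⟪e i, ξ⟫ ^ 2) / ∑ i, ⟪e i, ξ⟫ ^ 2)) := by
  have hcard : (Fintype.card ι : ℝ) ≠ 0 := by simp
  have hc : ∑ _i : ι, (Fintype.card ι : ℝ)⁻¹ = 1 := by simp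
  have h1 : Tendsto (fun h : ℝ => sinSqAvg σ (fun i => h • e i) ξ / h ^ 2) (𝓝[≠] 0)
      (𝓝 (∑ i, (Fintype.card ι : ℝ)⁻¹ * (σ i * (2 * Real.pi * ⟪e i, ξ⟫) ^ 2))) := by
    simp only [sinSqAvg, Finset.sum_div]
    refine tendsto_finsetSum _ fun i _ => ?_
    refine ((((tendsto_sin_mul_div (2 * Real.pi * ⟪e i, ξ⟫)).pow 2).const_mul (σ i)).const_mul
      (Fintype.card ι : ℝ)⁻¹).congr fun h => ?_
    rw [real_inner_smul_left, mul_left_comm (2 * Real.pi) h]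
    ring
  have h2 : Tendsto (fun h : ℝ => (1 - stepSymbol (fun i => h • e i) ξ) / h ^ 2) (𝓝[≠] 0)
      (𝓝 (∑ i, (Fintype.card ι : ℝ)⁻¹ * (2 * (Real.pi * ⟪e i, ξ⟫) ^ 2))) := by
    have : ∀ h : ℝ, (1 - stepSymbol (fun i => h • e i) ξ) / h ^ 2 =
        ∑ i, (Fintype.card ι : ℝ)⁻¹ * (2 * (Real.sin (h * (Real.pi * ⟪e i, ξ⟫)) / h) ^ 2) := by
      intro h
      rw [stepSymbol, ← hc, ← Finset.sum_sub_distrib, Finset.sum_div]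
      refine Finset.sum_congr rfl fun i _ => ?_
      have : Real.cos (2 * Real.pi * ⟪h • e i, ξ⟫) =
          1 - 2 * Real.sin (h * (Real.pi * ⟪e i, ξ⟫)) ^ 2 := by
        rw [real_inner_smul_left, show 2 * Real.pi * (h * ⟪e i, ξ⟫) =
          2 * (h * (Real.pi * ⟪e i, ξ⟫)) by ring, Real.cos_two_mul, Real.cos_sq']
        ring
      rw [this]
      ring
    simp only [this]
    exact tendsto_finsetSum _ fun i _ =>
      (((tendsto_sin_mul_div _).pow 2).const_mul 2).const_mul _
  have h3 : Tendsto (fun h : ℝ => 1 + stepSymbol (fun i => h • e i) ξ) (𝓝[≠] 0) (𝓝 2) := by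
    have : Continuous fun h : ℝ => 1 + stepSymbol (fun i => h • e i) ξ := by
      unfold stepSymbol
      fun_prop
    have := (this.tendsto 0).mono_left (nhdsWithin_le_nhds (s := {0}ᶜ))
    simpa [stepSymbol, one_add_one_eq_two] using this
  have h4 := h1.div (h2.mul h3) (by
    rw [← Finset.mul_sum]
    simp only [mul_pow, ← Finset.mul_sum]
    have := Real.pi_ne_zero
    positivity)
  have e1 : (∑ i, (Fintype.card ι : ℝ)⁻¹ * (σ i * (2 * Real.pi * ⟪e i, ξ⟫) ^ 2)) /
      ((∑ i, (Fintype.card ι : ℝ)⁻¹ * (2 * (Real.pi * ⟪e i, ξ⟫) ^ 2)) * 2) =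
      (∑ i, σ i * ⟪e i, ξ⟫ ^ 2) / ∑ i, ⟪e i, ξ⟫ ^ 2 := by
    have a1 : ∑ i, (Fintype.card ι : ℝ)⁻¹ * (σ i * (2 * Real.pi * ⟪e i, ξ⟫) ^ 2) =
        (Fintype.card ι : ℝ)⁻¹ * (4 * Real.pi ^ 2) * ∑ i, σ i * ⟪e i, ξ⟫ ^ 2 := by
      rw [Finset.mul_sum]
      exact Finset.sum_congr rfl fun i _ => by ring
    have a2 : (∑ i, (Fintype.card ι : ℝ)⁻¹ * (2 * (Real.pi * ⟪e i, ξ⟫) ^ 2)) * 2 =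
        (Fintype.card ι : ℝ)⁻¹ * (4 * Real.pi ^ 2) * ∑ i, ⟪e i, ξ⟫ ^ 2 := by
      rw [Finset.mul_sum, Finset.sum_mul]
      exact Finset.sum_congr rfl fun i _ => by ring
    rw [a1, a2, mul_div_mul_left]
    have := Real.pi_ne_zero
    positivity
  rw [e1] at h4
  refine h4.congr' (eventually_mem_nhdsWithin.mono fun h hh => ?_)
  have hh : h ≠ 0 := hh
  simp only [Pi.div_apply]
  rw [div_mul_eq_mul_div, div_div_div_cancel_right₀ (pow_ne_zero 2 hh)]
  congr 1
  ring

variable [FiniteDimensional ℝ V] [MeasurableSpace V] [BorelSpace V]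

theorem integrable_mul_fourierInv {a : V → ℂ} (ha : Integrable a) {φ : V → ℝ}
    (hφ : Integrable φ) : Integrable fun ξ => a ξ * 𝓕⁻ (fun x => (φ x : ℂ)) ξ := by
  have hφ' : Integrable fun x => (φ x : ℂ) := hφ.ofReal
  have hc : Continuous (𝓕⁻ fun x => (φ x : ℂ)) :=
    VectorFourier.fourierIntegral_continuous (L := -innerₗ V) Real.continuous_fourierChar
      (by simp; fun_prop) hφ'
  refine ha.mul_bdd (c := ∫ x, ‖(φ x : ℂ)‖) hc.aestronglyMeasurable (ae_of_all _ fun ξ => ?_)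
  rw [fourierInv_eq_mul]
  refine (norm_integral_le_integral_norm _).trans (le_of_eq ?_)
  simp only [norm_mul, Circle.norm_coe, one_mul]

theorem IsBellman.re_integral_partial_le [Nonempty ι] {p q C : ℝ} {B : ℝ → ℝ → ℝ}
    (hB : IsBellman p q C B) (hpq : p.HolderConjugate q)
    (e : ι → V) (σ : ι → ℝ) (hσ : ∀ i, |σ i| ≤ 1) {u φ : V → ℝ} {a : V → ℂ}
    (ha : Integrable a) (hua : ∀ x, (u x : ℂ) = 𝓕⁻ a x) (hφ1 : Integrable φ)
    (hu : MemLp u (ENNReal.ofReal p)) (hφ : MemLp φ (ENNReal.ofReal q)) (N : ℕ) :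
    (∫ ξ, ((sinSqAvg σ e ξ * ∑ n ∈ Finset.range N, (stepSymbol e ξ ^ 2) ^ n : ℝ) : ℂ) *
      (a ξ * 𝓕⁻ (fun x => (φ x : ℂ)) ξ)).re ≤ ∫ x, B (u x) (φ x) := by
  refine le_trans (le_of_eq ?_) (hB.sum_integral_centralDiff_le hpq e σ hσ hu hφ N)
  rw [← Complex.ofReal_re (∑ n ∈ Finset.range N, _)]
  congr 1
  push_cast
  simp only [integral_centralDiff_mul_centralDiff ha hua hφ1]
  simp only [← integral_const_mul]
  have hi : ∀ n i, Integrable fun ξ => (Fintype.card ι : ℂ)⁻¹ * ((σ i : ℂ) / 4 *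
      (((4 * Real.sin (2 * Real.pi * ⟪e i, ξ⟫) ^ 2 * (stepSymbol e ξ ^ 2) ^ n : ℝ) : ℂ) *
        (a ξ * 𝓕⁻ (fun x => (φ x : ℂ)) ξ))) := by
    intro n i
    have := integrable_bdd_mul (m := fun ξ =>
      Real.sin (2 * Real.pi * ⟪e i, ξ⟫) ^ 2 * (stepSymbol e ξ ^ 2) ^ n) (by fun_prop)
      (fun ξ => by
        rw [abs_mul, abs_pow, abs_pow, abs_pow]
        exact mul_le_one₀ (pow_le_one₀ (abs_nonneg _) (Real.abs_sin_le_one _)) (by positivity)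
          (pow_le_one₀ (by positivity) (pow_le_one₀ (abs_nonneg _) (abs_stepSymbol_le e ξ))))
      (integrable_mul_fourierInv ha hφ1)
    refine (((this.const_mul 4).const_mul ((σ i : ℂ) / 4)).const_mul
      (Fintype.card ι : ℂ)⁻¹).congr (ae_of_all _ fun ξ => ?_)
    push_cast
    ring
  rw [Finset.sum_congr rfl fun n _ => (integral_finsetSum _ fun i _ => hi n i).symm,
    ← integral_finsetSum _ fun n _ => integrable_finsetSum _ fun i _ => hi n i]
  refine integral_congr_ae (ae_of_all _ fun ξ => ?_)
  simp only [sinSqAvg]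
  push_cast
  rw [Finset.sum_mul_sum, Finset.sum_mul, Finset.sum_comm]
  refine Finset.sum_congr rfl fun n _ => ?_
  rw [Finset.sum_mul]
  refine Finset.sum_congr rfl fun i _ => ?_
  ring

theorem IsBellman.re_integral_riesz_le [Nonempty ι] {p q C : ℝ} {B : ℝ → ℝ → ℝ}
    (hB : IsBellman p q C B) (hpq : p.HolderConjugate q)
    (e : ι → V) (σ : ι → ℝ) (hσ : ∀ i, |σ i| ≤ 1)
    (he : ∀ᵐ ξ : V, ∑ i, ⟪e i, ξ⟫ ^ 2 ≠ 0) {u φ : V → ℝ} {a : V → ℂ}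
    (ha : Integrable a) (hua : ∀ x, (u x : ℂ) = 𝓕⁻ a x) (hφ1 : Integrable φ)
    (hu : MemLp u (ENNReal.ofReal p)) (hφ : MemLp φ (ENNReal.ofReal q)) :
    (∫ ξ, (((∑ i, σ i * ⟪e i, ξ⟫ ^ 2) / ∑ i, ⟪e i, ξ⟫ ^ 2 : ℝ) : ℂ) *
      (a ξ * 𝓕⁻ (fun x => (φ x : ℂ)) ξ)).re ≤ ∫ x, B (u x) (φ x) := by
  have hb := integrable_mul_fourierInv ha hφ1
  have key : ∀ h : ℝ, (∫ ξ, ((sinSqAvg σ (fun i => h • e i) ξ /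
      (1 - stepSymbol (fun i => h • e i) ξ ^ 2) : ℝ) : ℂ) *
      (a ξ * 𝓕⁻ (fun x => (φ x : ℂ)) ξ)).re ≤ ∫ x, B (u x) (φ x) := by
    intro h
    refine le_of_tendsto' (x := atTop) ((Complex.continuous_re.tendsto _).comp ?_)
      (fun N : ℕ => hB.re_integral_partial_le hpq (fun i => h • e i) σ hσ ha hua hφ1 hu hφ N)
    refine tendsto_integral_of_dominated_convergence
      (fun ξ => ‖a ξ * 𝓕⁻ (fun x => (φ x : ℂ)) ξ‖) (fun N => ?_) hb.norm
      (fun N => ae_of_all _ fun ξ => ?_) (ae_of_all _ fun ξ => ?_)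
    · exact AEStronglyMeasurable.mul (by fun_prop) hb.1
    · rw [norm_mul, Complex.norm_real]
      exact mul_le_of_le_one_left (norm_nonneg _) (abs_sinSqAvg_mul_geom_le σ hσ _ ξ N)
    · exact ((Complex.continuous_ofReal.tendsto _).comp
        (tendsto_sinSqAvg_mul_geom σ hσ _ ξ)).mul_const _
  refine le_of_tendsto' (f := fun h : ℝ => _) (x := 𝓝[≠] (0 : ℝ))
    ((Complex.continuous_re.tendsto _).comp ?_) key
  refine tendsto_integral_filter_of_dominated_convergence
      (fun ξ => ‖a ξ * 𝓕⁻ (fun x => (φ x : ℂ)) ξ‖) (Eventually.of_forall fun h => ?_)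
      (Eventually.of_forall fun h => ae_of_all _ fun ξ => ?_) hb.norm ?_
  · refine AEStronglyMeasurable.mul ?_ hb.1
    refine (Complex.measurable_ofReal.comp (Measurable.div ?_ ?_)).aestronglyMeasurable
    · exact (continuous_sinSqAvg _ _).measurable
    · exact (continuous_const.sub ((continuous_stepSymbol _).pow 2)).measurable
  · rw [norm_mul, Complex.norm_real]
    exact mul_le_of_le_one_left (norm_nonneg _) (abs_sinSqAvg_div_le σ hσ _ ξ)
  · filter_upwards [he] with ξ hξ
    exact ((Complex.continuous_ofReal.tendsto _).comp
        (tendsto_sinSqAvg_div σ e ξ hξ)).mul_const _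

end RieszSymbol

section RieszBound

open scoped FourierTransform RealInnerProductSpace SchwartzMap LineDeriv

variable {d : Type*} [Fintype d] [DecidableEq d]

/-- The steps `e_i + e_j` and `e_i - e_j` of a random walk on `ℝ^d`. -/
def pairStep (k : d × d × Bool) : EuclideanSpace ℝ d :=
  EuclideanSpace.single k.1 1 + (if k.2.2 then 1 else -1 : ℝ) • EuclideanSpace.single k.2.1 1

/-- Signs selecting the steps `e_i ± e_j` in polarization of the form `ξ ↦ ξ_i ξ_j`. -/
def pairSign (i j : d) (k : d × d × Bool) : ℝ :=
  if k.1 = i ∧ k.2.1 = j then (if k.2.2 then 1 else -1) else 0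

theorem abs_pairSign_le {d : Type*} [DecidableEq d] (i j : d) (k : d × d × Bool) :
    |pairSign i j k| ≤ 1 := by
  unfold pairSign
  split_ifs <;> simp

theorem inner_pairStep (k : d × d × Bool) (ξ : EuclideanSpace ℝ d) :
    ⟪pairStep k, ξ⟫ = ξ k.1 + (if k.2.2 then 1 else -1 : ℝ) * ξ k.2.1 := by
  rw [pairStep, inner_add_left, real_inner_smul_left]
  simp [EuclideanSpace.inner_single_left]

theorem sum_inner_pairStep_sq (ξ : EuclideanSpace ℝ d) :
    ∑ k, ⟪pairStep k, ξ⟫ ^ 2 = 4 * Fintype.card d * ‖ξ‖ ^ 2 := by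
  have h : ∀ i j : d, (ξ i + ξ j) ^ 2 + (ξ i + -1 * ξ j) ^ 2 = 2 * ξ i ^ 2 + 2 * ξ j ^ 2 :=
    fun i j => by ring
  simp only [inner_pairStep, Fintype.sum_prod_type, Fintype.sum_bool,
    EuclideanSpace.real_norm_sq_eq]
  simp only [if_true, Bool.false_eq_true, if_false, one_mul, h, Finset.sum_add_distrib,
    Finset.sum_const, ← Finset.mul_sum, Finset.card_univ, nsmul_eq_mul]
  ring

theorem sum_pairSign_mul_inner_sq (i j : d) (ξ : EuclideanSpace ℝ d) :
    ∑ k, pairSign i j k * ⟪pairStep k, ξ⟫ ^ 2 = 4 * (ξ i * ξ j) := by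
  simp only [inner_pairStep, Fintype.sum_prod_type, Fintype.sum_bool, pairSign]
  simp only [if_true, Bool.false_eq_true, if_false, one_mul, ite_and, ite_mul, zero_mul,
    Finset.sum_ite_eq', Finset.mem_univ, Finset.sum_add_distrib, Finset.sum_ite_irrel,
    Finset.sum_const_zero]
  ring

theorem IsBellman.re_integral_coord_le {p q C : ℝ} {B : ℝ → ℝ → ℝ}
    (hB : IsBellman p q C B) (hpq : p.HolderConjugate q) (i j : d)
    {u φ : EuclideanSpace ℝ d → ℝ} {a : EuclideanSpace ℝ d → ℂ}
    (ha : Integrable a) (hua : ∀ x, (u x : ℂ) = 𝓕⁻ a x) (hφ1 : Integrable φ)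
    (hu : MemLp u (ENNReal.ofReal p)) (hφ : MemLp φ (ENNReal.ofReal q)) :
    (∫ ξ, ((ξ i * ξ j / ‖ξ‖ ^ 2 : ℝ) : ℂ) * (a ξ * 𝓕⁻ (fun x => (φ x : ℂ)) ξ)).re ≤
      Fintype.card d * ∫ x, B (u x) (φ x) := by
  have : Nonempty d := ⟨i⟩
  have hd : (Fintype.card d : ℝ) ≠ 0 := by simp
  have he : ∀ᵐ ξ : EuclideanSpace ℝ d, ∑ k, ⟪pairStep k, ξ⟫ ^ 2 ≠ 0 := by
    filter_upwards [Measure.ae_ne volume (0 : EuclideanSpace ℝ d)] with ξ hξ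
    rw [sum_inner_pairStep_sq]
    have := norm_ne_zero_iff.2 hξ
    positivity
  have h := hB.re_integral_riesz_le hpq pairStep (pairSign i j) (abs_pairSign_le i j) he ha hua
    hφ1 hu hφ
  simp only [sum_inner_pairStep_sq, sum_pairSign_mul_inner_sq] at h
  refine le_trans (le_of_eq ?_) (mul_le_mul_of_nonneg_left h (Nat.cast_nonneg _))
  rw [← Complex.re_ofReal_mul, ← integral_const_mul]
  congr 2
  funext ξ
  rw [← mul_assoc (Complex.ofReal _) (Complex.ofReal _), ← Complex.ofReal_mul]
  congr 2
  rw [mul_assoc 4, mul_div_mul_left _ _ four_ne_zero, mul_comm (Fintype.card d : ℝ) (‖ξ‖ ^ 2),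
    ← div_div, mul_div_cancel₀ _ hd]

/-- A priori `L^p` bound for Riesz transform identities, by testing against `w |w| ^ (p - 2)`. -/
theorem exists_integral_rpow_le_of_riesz {p : ℝ} (hp : 1 < p) (j : d) :
    ∃ K : ℝ, 0 < K ∧ ∀ (w : EuclideanSpace ℝ d → ℝ) (u : d → EuclideanSpace ℝ d → ℝ)
      (b : EuclideanSpace ℝ d → ℂ) (a : d → EuclideanSpace ℝ d → ℂ),
      Integrable b → (∀ i, Integrable (a i)) → (∀ x, (w x : ℂ) = 𝓕⁻ b x) →
      (∀ i x, (u i x : ℂ) = 𝓕⁻ (a i) x) → MemLp w (ENNReal.ofReal p) →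
      MemLp w (ENNReal.ofReal (p - 1)) → (∀ i, MemLp (u i) (ENNReal.ofReal p)) →
      (∀ᵐ ξ, b ξ = ∑ i, ((ξ i * ξ j / ‖ξ‖ ^ 2 : ℝ) : ℂ) * a i ξ) →
      ∫ x, |w x| ^ p ≤ K * ∑ i, ∫ x, |u i x| ^ p := by
  have hpq : p.HolderConjugate (Real.conjExponent p) := Real.HolderConjugate.conjExponent hp
  set q := Real.conjExponent p with hq
  obtain ⟨C, B, hC, hB⟩ := exists_isBellman hpq
  have hd : (0 : ℝ) < Fintype.card d := by
    have : Nonempty d := ⟨j⟩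
    positivity
  set D : ℝ := (Fintype.card d : ℝ) with hD
  set τ : ℝ := (1 / (2 * D ^ 2 * C)) ^ (q - 1)⁻¹ with hτ
  have hq1 : 0 < q - 1 := hpq.symm.sub_one_pos
  have hτ0 : 0 < τ := by positivity
  have hτq : D ^ 2 * C * τ ^ q = τ / 2 := by
    have : τ ^ q = τ * (1 / (2 * D ^ 2 * C)) := by
      conv_lhs => rw [show q = 1 + (q - 1) by ring, Real.rpow_add hτ0, Real.rpow_one]
      rw [hτ, Real.rpow_inv_rpow (by positivity) hq1.ne']
    rw [this]
    field_simp
  refine ⟨2 * D * C / τ, by positivity, fun w u b a hb ha hwb hua hw hw1 hu hba => ?_⟩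
  set φ : EuclideanSpace ℝ d → ℝ := fun x => τ * (w x * |w x| ^ (p - 2)) with hφdef
  have hφabs : ∀ x, |φ x| = τ * |w x| ^ (p - 1) := by
    intro x
    rcases eq_or_ne (w x) 0 with h | h
    · simp [hφdef, h, Real.zero_rpow (by linarith : p - 1 ≠ 0)]
    · rw [hφdef, abs_mul, abs_of_pos hτ0, abs_mul, abs_of_nonneg (a := |w x| ^ (p - 2))
        (by positivity), show p - 1 = 1 + (p - 2) by ring, Real.rpow_add (abs_pos.2 h),
        Real.rpow_one]
  have hwφ : ∀ x, w x * φ x = τ * |w x| ^ p := by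
    intro x
    rcases eq_or_ne (w x) 0 with h | h
    · simp [hφdef, h, Real.zero_rpow (by linarith : p ≠ 0)]
    · rw [show p = 2 + (p - 2) by ring, Real.rpow_add (abs_pos.2 h), Real.rpow_two, sq_abs]
      simp only [hφdef]
      ring_nf
  have hφm : AEStronglyMeasurable φ volume := by
    refine AEMeasurable.aestronglyMeasurable ?_
    have := hw.1.aemeasurable
    fun_prop
  have hφq : ∀ x, |φ x| ^ q = τ ^ q * |w x| ^ p := by
    intro x
    rw [hφabs, Real.mul_rpow hτ0.le (by positivity), ← Real.rpow_mul (abs_nonneg _),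
      hpq.sub_one_mul_conj]
  have iw : Integrable fun x => |w x| ^ p := by
    have := hw.integrable_norm_rpow (by simp; linarith) (by simp)
    rwa [ENNReal.toReal_ofReal (by linarith)] at this
  have iu : ∀ i, Integrable fun x => |u i x| ^ p := by
    intro i
    have := (hu i).integrable_norm_rpow (by simp; linarith) (by simp)
    rwa [ENNReal.toReal_ofReal (by linarith)] at this
  have hφ1 : Integrable φ := by
    have := hw1.integrable_norm_rpow (by simp; linarith) (by simp)
    rw [ENNReal.toReal_ofReal (by linarith)] at this
    exact (this.const_mul τ).mono' hφm (ae_of_all _ fun x => (hφabs x).le)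
  have hφLq : MemLp φ (ENNReal.ofReal q) := by
    rw [← integrable_norm_rpow_iff hφm (by simp; linarith) (by simp),
      ENNReal.toReal_ofReal (by linarith)]
    simp only [Real.norm_eq_abs, hφq]
    exact iw.const_mul _
  have key : τ * ∫ x, |w x| ^ p ≤ ∑ i, D * ∫ x, B (u i x) (φ x) := by
    have h1 : ((τ * ∫ x, |w x| ^ p : ℝ) : ℂ) =
        ∑ i, ∫ ξ, ((ξ i * ξ j / ‖ξ‖ ^ 2 : ℝ) : ℂ) * (a i ξ * 𝓕⁻ (fun x => (φ x : ℂ)) ξ) := by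
      rw [← integral_const_mul, ← integral_complex_ofReal]
      simp only [← hwφ, Complex.ofReal_mul, hwb]
      have hφc : Integrable fun x => (φ x : ℂ) := hφ1.ofReal
      rw [integral_fourierInv_mul_eq_flip hb hφc, ← integral_finsetSum]
      · refine integral_congr_ae ?_
        filter_upwards [hba] with ξ hξ
        rw [hξ, Finset.sum_mul]
        exact Finset.sum_congr rfl fun i _ => by push_cast; ring
      · intro i _
        refine (integrable_mul_fourierInv (ha i) hφ1).bdd_mul (c := 1) ?_ (ae_of_all _ fun ξ => ?_)
        · refine Measurable.aestronglyMeasurable ?_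
          fun_prop
        · have := PiLp.norm_apply_le ξ i
          have := PiLp.norm_apply_le ξ j
          rw [Complex.norm_real, norm_div, norm_mul, norm_pow, norm_norm]
          refine div_le_one_of_le₀ ?_ (by positivity)
          rw [sq]
          gcongr
    rw [← Complex.ofReal_re (τ * _), h1, Complex.re_sum]
    exact Finset.sum_le_sum fun i _ =>
      hB.re_integral_coord_le hpq i j (ha i) (hua i) hφ1 (hu i) hφLq
  have hBi : ∀ i, ∫ x, B (u i x) (φ x) ≤ C * ((∫ x, |u i x| ^ p) + τ ^ q * ∫ x, |w x| ^ p) := by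
    intro i
    rw [← integral_const_mul, ← integral_add (iu i) (iw.const_mul _), ← integral_const_mul]
    refine integral_mono (hB.integrable_comp hpq.pos hpq.symm.pos (hu i) hφLq)
      (((iu i).add (iw.const_mul _)).const_mul _) fun x => ?_
    have := hB.le_rpow (u i x) (φ x)
    rwa [hφq] at this
  have h2 : τ * ∫ x, |w x| ^ p ≤
      D * C * ∑ i, (∫ x, |u i x| ^ p) + D ^ 2 * C * τ ^ q * ∫ x, |w x| ^ p := by
    refine key.trans ((Finset.sum_le_sum fun i _ =>
      mul_le_mul_of_nonneg_left (hBi i) hd.le).trans (le_of_eq ?_))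
    simp only [← Finset.mul_sum, Finset.sum_add_distrib, Finset.sum_const, Finset.card_univ,
      nsmul_eq_mul, ← hD]
    ring
  rw [hτq] at h2
  rw [div_mul_eq_mul_div, le_div_iff₀ hτ0]
  linarith

/-- The complexification of a real-valued Schwartz function. -/
def complexify {E : Type*} [NormedAddCommGroup E] [NormedSpace ℝ E] (g : 𝓢(E, ℝ)) : 𝓢(E, ℂ) :=
  g.postcompCLM Complex.ofRealCLM

theorem fourier_complexify_lineDeriv {V : Type*} [NormedAddCommGroup V] [InnerProductSpace ℝ V]
    [FiniteDimensional ℝ V] [MeasurableSpace V] [BorelSpace V] (g : 𝓢(V, ℝ)) (m ξ : V) :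
    𝓕 (complexify (∂_{m} g)) ξ = 2 * Real.pi * Complex.I * ⟪ξ, m⟫ * 𝓕 (complexify g) ξ := by
  have h : complexify (∂_{m} g) = ∂_{m} (complexify g) := by
    ext x
    rw [SchwartzMap.lineDerivOp_apply_eq_fderiv]
    have : fderiv ℝ (complexify g) x = Complex.ofRealCLM ∘L fderiv ℝ g x :=
      (Complex.ofRealCLM.hasFDerivAt.comp x (g.differentiable x).hasFDerivAt).fderiv
    rw [this]
    simp [complexify, SchwartzMap.lineDerivOp_apply_eq_fderiv]
  have ht : (fun x : V => ⟪x, m⟫).HasTemperateGrowth := by fun_prop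
  rw [h, SchwartzMap.fourier_lineDerivOp_eq]
  simp [SchwartzMap.smulLeftCLM_apply_apply ht, mul_assoc]

/-- If `Δ f = div G` for Schwartz data, then `∇ f` is controlled by `G` in `L^p`. -/
theorem exists_integral_lineDeriv_rpow_le {p : ℝ} (hp : 1 < p) (j : d) :
    ∃ K : ℝ, 0 < K ∧ ∀ (f : 𝓢(EuclideanSpace ℝ d, ℝ)) (G : d → 𝓢(EuclideanSpace ℝ d, ℝ)),
      ∑ i : d, ∂_{EuclideanSpace.single i (1 : ℝ)} (∂_{EuclideanSpace.single i (1 : ℝ)} f) =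
        ∑ i : d, ∂_{EuclideanSpace.single i (1 : ℝ)} (G i) →
      ∫ x, |(∂_{EuclideanSpace.single j (1 : ℝ)} f) x| ^ p ≤ K * ∑ i, ∫ x, |G i x| ^ p := by
  have : Nonempty d := ⟨j⟩
  obtain ⟨K, hK, H⟩ := exists_integral_rpow_le_of_riesz hp j
  refine ⟨K, hK, fun f G hfG => ?_⟩
  have inv : ∀ (g : 𝓢(EuclideanSpace ℝ d, ℝ)) x,
      (g x : ℂ) =
        𝓕⁻ ((𝓕 (complexify g) : 𝓢(EuclideanSpace ℝ d, ℂ)) : EuclideanSpace ℝ d → ℂ) x := by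
    intro g x
    rw [← SchwartzMap.fourierInv_coe, FourierTransform.fourierInv_fourier_eq]
    rfl
  refine H (∂_{EuclideanSpace.single j (1 : ℝ)} f : 𝓢(EuclideanSpace ℝ d, ℝ)) (fun i => G i)
    (𝓕 (complexify (∂_{EuclideanSpace.single j (1 : ℝ)} f)) : 𝓢(_, ℂ))
    (fun i => (𝓕 (complexify (G i)) : 𝓢(_, ℂ))) (SchwartzMap.integrable _)
    (fun i => SchwartzMap.integrable _) (inv _) (fun i => inv _) (SchwartzMap.memLp _ _ _)
    (SchwartzMap.memLp _ _ _) (fun i => SchwartzMap.memLp _ _ _) ?_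
  have hsum : ∀ (g : d → 𝓢(EuclideanSpace ℝ d, ℝ)),
      𝓕 (complexify (∑ i, g i)) = ∑ i, 𝓕 (complexify (g i)) := by
    intro g
    have : complexify (∑ i, g i) = ∑ i, complexify (g i) := map_sum (SchwartzMap.postcompCLM _) _ _
    rw [this]
    exact map_sum (FourierTransform.fourierCLM ℂ _) _ _
  have hcoord : ∀ (ξ : EuclideanSpace ℝ d) i, ⟪ξ, EuclideanSpace.single i (1 : ℝ)⟫ = ξ i := by
    intro ξ i
    simp [EuclideanSpace.inner_single_right]
  filter_upwards [Measure.ae_ne volume (0 : EuclideanSpace ℝ d)] with ξ hξ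
  have hn := norm_ne_zero_iff.2 hξ
  have h1 := congrArg (fun g => (𝓕 (complexify g) : 𝓢(EuclideanSpace ℝ d, ℂ)) ξ) hfG
  simp only [hsum, sum_apply, fourier_complexify_lineDeriv, hcoord] at h1
  have h2 : ((‖ξ‖ ^ 2 : ℝ) : ℂ) * (2 * Real.pi * Complex.I * 𝓕 (complexify f) ξ) =
      ∑ i, (ξ i : ℂ) * 𝓕 (complexify (G i)) ξ := by
    have h2pi : 2 * Real.pi * Complex.I ≠ 0 := Complex.two_pi_I_ne_zero
    refine mul_left_cancel₀ h2pi ?_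
    rw [EuclideanSpace.real_norm_sq_eq, Finset.mul_sum]
    push_cast
    rw [Finset.sum_mul, Finset.mul_sum]
    refine Eq.trans (Finset.sum_congr rfl fun i _ => ?_)
      (h1.trans (Finset.sum_congr rfl fun i _ => ?_)) <;> ring
  rw [fourier_complexify_lineDeriv, hcoord]
  have hn' : ((‖ξ‖ ^ 2 : ℝ) : ℂ) ≠ 0 := by exact_mod_cast pow_ne_zero 2 hn
  refine mul_left_cancel₀ hn' ?_
  have h3 : ((‖ξ‖ ^ 2 : ℝ) : ℂ) *
      ∑ i, ((ξ i * ξ j / ‖ξ‖ ^ 2 : ℝ) : ℂ) * 𝓕 (complexify (G i)) ξ =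
      ξ j * ∑ i, (ξ i : ℂ) * 𝓕 (complexify (G i)) ξ := by
    rw [Finset.mul_sum, Finset.mul_sum]
    refine Finset.sum_congr rfl fun i _ => ?_
    rw [Complex.ofReal_div, ← mul_assoc, mul_div_cancel₀ _ hn']
    push_cast
    ring
  rw [h3, ← h2]
  ring

end RieszBound

section VectorFields

open scoped SchwartzMap LineDeriv

theorem lineDerivOp_swap {V : Type*} [NormedAddCommGroup V] [NormedSpace ℝ V] (g : 𝓢(V, ℝ))
    (a b : V) : ∂_{a} (∂_{b} g) = ∂_{b} (∂_{a} g) := by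
  have key : ∀ (a b x : V), (∂_{a} (∂_{b} g)) x = fderiv ℝ (fderiv ℝ g) x a b := by
    intro a b x
    have h : ((∂_{b} g : 𝓢(V, ℝ)) : V → ℝ) = fun y => fderiv ℝ g y b :=
      funext fun y => SchwartzMap.lineDerivOp_apply_eq_fderiv b g y
    have hd : DifferentiableAt ℝ (fderiv ℝ g) x :=
      ((g.smooth 2).fderiv_right (m := 1) (by norm_num)).differentiable (by norm_num) x
    rw [SchwartzMap.lineDerivOp_apply_eq_fderiv, h, fderiv_clm_apply hd (by fun_prop)]
    simp
  ext x
  rw [key, key]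
  exact ((g.smooth 2).contDiffAt.isSymmSndFDerivAt (by simp)).eq a b

/-- The vector field with the given Schwartz components. -/
def schwartzVec (G : Fin 3 → 𝓢(EuclideanSpace ℝ (Fin 3), ℝ)) (x : EuclideanSpace ℝ (Fin 3)) :
    EuclideanSpace ℝ (Fin 3) :=
  toE3 fun i => G i x

theorem memLp_schwartzVec (G : Fin 3 → 𝓢(EuclideanSpace ℝ (Fin 3), ℝ)) (p : ENNReal) :
    MemLp (schwartzVec G) p := by
  refine MemLp.of_eval_piLp fun i => ?_
  exact (G i).memLp p volume

/-- If `Δ f = div G`, then `∇ f` is controlled by `G` in `L^p`. -/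
theorem exists_eLpNorm_grad_le {p : ℝ} (hp : 1 < p) :
    ∃ K : ℝ, 0 ≤ K ∧ ∀ (f : 𝓢(EuclideanSpace ℝ (Fin 3), ℝ))
      (G : Fin 3 → 𝓢(EuclideanSpace ℝ (Fin 3), ℝ)),
      ∑ i, ∂_{ee i} (∂_{ee i} f) = ∑ i, ∂_{ee i} (G i) →
      eLpNorm (schwartzVec fun i => ∂_{ee i} f) (ENNReal.ofReal p) volume ≤
        ENNReal.ofReal K * eLpNorm (schwartzVec G) (ENNReal.ofReal p) volume := by
  choose K hK H using fun j : Fin 3 => exists_integral_lineDeriv_rpow_le (d := Fin 3) hp j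
  have hp0 : (0 : ℝ) < p := by linarith
  have hpe : ENNReal.ofReal p ≠ 0 := by simpa using hp0
  have hpt : (ENNReal.ofReal p).toReal = p := ENNReal.toReal_ofReal hp0.le
  refine ⟨∑ j, (K j * 3) ^ p⁻¹, Finset.sum_nonneg fun j _ => by have := hK j; positivity,
    fun f G hfG => ?_⟩
  have iG : Integrable fun x => ‖schwartzVec G x‖ ^ p := by
    simpa only [hpt] using (memLp_schwartzVec G _).integrable_norm_rpow hpe ENNReal.ofReal_ne_top
  have hcomp : ∀ j, eLpNorm (∂_{ee j} f : 𝓢(EuclideanSpace ℝ (Fin 3), ℝ)) (ENNReal.ofReal p) volume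
      ≤ ENNReal.ofReal ((K j * 3) ^ p⁻¹) *
        eLpNorm (schwartzVec G) (ENNReal.ofReal p) volume := by
    intro j
    have hj := hK j
    have h1 : ∫ x, |(∂_{ee j} f) x| ^ p ≤ K j * 3 * ∫ x, ‖schwartzVec G x‖ ^ p := by
      refine (H j f G hfG).trans ?_
      rw [mul_assoc]
      refine mul_le_mul_of_nonneg_left ?_ (hK j).le
      calc ∑ i, ∫ x, |G i x| ^ p ≤ ∑ _i : Fin 3, ∫ x, ‖schwartzVec G x‖ ^ p := by
            refine Finset.sum_le_sum fun i _ => integral_mono_of_nonneg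
              (ae_of_all _ fun x => by positivity) iG (ae_of_all _ fun x => ?_)
            exact Real.rpow_le_rpow (abs_nonneg _) (PiLp.norm_apply_le (schwartzVec G x) i) hp0.le
        _ = _ := by simp
    rw [((∂_{ee j} f : 𝓢(EuclideanSpace ℝ (Fin 3), ℝ)).memLp _ volume).eLpNorm_eq_integral_rpow_norm
        hpe ENNReal.ofReal_ne_top,
      (memLp_schwartzVec G _).eLpNorm_eq_integral_rpow_norm hpe ENNReal.ofReal_ne_top,
      ← ENNReal.ofReal_mul (by positivity), hpt,
      ← Real.mul_rpow (by positivity) (integral_nonneg fun x => by positivity)]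
    exact ENNReal.ofReal_le_ofReal (Real.rpow_le_rpow (integral_nonneg fun x => by positivity) h1
      (by positivity))
  have hsum : schwartzVec (fun i => ∂_{ee i} f) = ∑ j, fun x => (∂_{ee j} f) x • ee j := by
    funext x
    ext i
    simp [schwartzVec, toE3, ee, Pi.single_apply]
  rw [hsum, ENNReal.ofReal_sum_of_nonneg fun j _ => by have := hK j; positivity, Finset.sum_mul]
  refine (eLpNorm_sum_le (fun j _ => ?_) (by simpa using hp.le)).trans
    (Finset.sum_le_sum fun j _ => le_trans (eLpNorm_mono fun x => ?_) (hcomp j))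
  · exact ((∂_{ee j} f : 𝓢(EuclideanSpace ℝ (Fin 3), ℝ)).continuous.smul
      continuous_const).aestronglyMeasurable
  · simp [norm_smul, ee]

/-- If `Δ f = div G` and `G + F = 2 ∇ f`, then `F` is controlled by `G` in `L^p`. -/
theorem exists_eLpNorm_le_of_add_eq_grad {p : ℝ} (hp : 1 < p) :
    ∃ K : ℝ, 0 < K ∧ ∀ (f : 𝓢(EuclideanSpace ℝ (Fin 3), ℝ))
      (G F : Fin 3 → 𝓢(EuclideanSpace ℝ (Fin 3), ℝ)),
      ∑ i, ∂_{ee i} (∂_{ee i} f) = ∑ i, ∂_{ee i} (G i) →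
      (∀ i, G i + F i = (2 : ℝ) • ∂_{ee i} f) →
      eLpNorm (schwartzVec F) (ENNReal.ofReal p) volume ≤
        ENNReal.ofReal K * eLpNorm (schwartzVec G) (ENNReal.ofReal p) volume := by
  obtain ⟨K, hK, H⟩ := exists_eLpNorm_grad_le hp
  refine ⟨2 * K + 1, by positivity, fun f G F hfG hG => ?_⟩
  have hvec : schwartzVec F = (2 : ℝ) • schwartzVec (fun i => ∂_{ee i} f) - schwartzVec G := by
    funext x
    ext i
    have := congrArg (fun g => g x) (hG i)
    simp only [add_apply, smul_apply, smul_eq_mul] at this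
    simp only [schwartzVec, toE3, Pi.sub_apply, Pi.smul_apply, PiLp.sub_apply, PiLp.smul_apply,
      smul_eq_mul, WithLp.equiv_symm_apply]
    linarith
  rw [hvec]
  refine (eLpNorm_sub_le ((memLp_schwartzVec _ 1).1.const_smul _) (memLp_schwartzVec _ 1).1
    (by simpa using hp.le)).trans ?_
  rw [eLpNorm_const_smul, ENNReal.ofReal_add (by positivity) zero_le_one, add_mul,
    ENNReal.ofReal_one, one_mul, ENNReal.ofReal_mul zero_le_two, mul_assoc,
    Real.enorm_eq_ofReal zero_le_two]
  gcongr
  exact H f G hfG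

end VectorFields

open scoped LineDeriv

/-- For every `1 < q < ∞` there is a constant `C_q > 0` such that for
every divergence-free Schwartz vector field `u : ℝ³ → ℝ³` with strain tensor `S` and
vorticity `ω = ∇ × u`, one has the two-sided bound
`(1/C_q) ‖e₃ × ω‖_{L^q} ≤ ‖2 S e₃‖_{L^q} ≤ C_q ‖e₃ × ω‖_{L^q}`. -/
theorem two_strain_e3_equiv_e3_cross_vort (q : ℝ) (hq1 : 1 < q) :
    ∃ C : ℝ, 0 < C ∧
      ∀ u : Fin 3 → SchwartzMap (EuclideanSpace ℝ (Fin 3)) ℝ,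
        (∀ x, ∑ i, pdW u i i x = 0) →
        ENNReal.ofReal (1 / C) *
            eLpNorm (fun x => toE3 (cross ![0, 0, 1] (vortW u x))) (ENNReal.ofReal q) volume
          ≤ eLpNorm (fun x => toE3 (((2 : ℝ) • strainW u x).mulVec ![0, 0, 1]))
              (ENNReal.ofReal q) volume ∧
        eLpNorm (fun x => toE3 (((2 : ℝ) • strainW u x).mulVec ![0, 0, 1]))
            (ENNReal.ofReal q) volume
          ≤ ENNReal.ofReal C *
              eLpNorm (fun x => toE3 (cross ![0, 0, 1] (vortW u x)))
                (ENNReal.ofReal q) volume := by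
  obtain ⟨K, hK, H⟩ := exists_eLpNorm_le_of_add_eq_grad hq1
  refine ⟨K, hK, fun u hu => ?_⟩
  set P : Fin 3 → SchwartzMap (EuclideanSpace ℝ (Fin 3)) ℝ :=
    fun i => ∂_{ee i} (u 2) + ∂_{ee 2} (u i) with hP
  set M : Fin 3 → SchwartzMap (EuclideanSpace ℝ (Fin 3)) ℝ :=
    fun i => ∂_{ee i} (u 2) - ∂_{ee 2} (u i) with hM
  have hstrain : (fun x => toE3 (((2 : ℝ) • strainW u x).mulVec ![0, 0, 1])) = schwartzVec P := by
    funext x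
    refine congrArg toE3 (funext fun i => ?_)
    simp only [hP, add_apply, SchwartzMap.lineDerivOp_apply_eq_fderiv]
    simp only [Matrix.mulVec, dotProduct, Fin.sum_univ_three, Matrix.smul_apply, strainW,
      Matrix.of_apply, pdW, smul_eq_mul]
    simp
    ring
  have hvort : (fun x => toE3 (cross ![0, 0, 1] (vortW u x))) = schwartzVec M := by
    funext x
    refine congrArg toE3 (funext fun i => ?_)
    simp only [hM, sub_apply, SchwartzMap.lineDerivOp_apply_eq_fderiv]
    fin_cases i <;> simp [cross, vortW, pdW]
  have hdiv : ∑ i, ∂_{ee i} (∂_{ee 2} (u i)) = 0 := by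
    have h0 : ∑ i, ∂_{ee i} (u i) = 0 := by
      ext x
      simpa [sum_apply, SchwartzMap.lineDerivOp_apply_eq_fderiv, pdW] using hu x
    simp only [lineDerivOp_swap _ (ee _) (ee 2)]
    rw [← LineDeriv.lineDerivOp_sum, h0, LineDeriv.lineDerivOp_zero]
  rw [hstrain, hvort]
  constructor
  · have h := H (u 2) P M (by simp [hP, LineDeriv.lineDerivOp_add, Finset.sum_add_distrib, hdiv])
      (fun i => by simp only [hP, hM, two_smul]; abel)
    rw [one_div, ENNReal.ofReal_inv_of_pos hK]
    exact (ENNReal.inv_mul_le_iff (by simpa using hK) ENNReal.ofReal_ne_top).2 h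
  · exact H (u 2) M P (by
      simp [hM, sub_eq_add_neg, LineDeriv.lineDerivOp_add, LineDeriv.lineDerivOp_neg,
        Finset.sum_add_distrib, hdiv])
      (fun i => by simp only [hP, hM, two_smul]; abel)
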